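/- arXiv:1412.7890 — 3 statements merged into one kernel-verified Lean document; each statement's English description precedes it below -/
import Mathlib

section
/- Let ψ(t) := (1+t)log(1+t) − t. For every δ ∈ (0,1), both ψ(δ) ≥ (log 4 − 1) δ² and ψ(−δ) ≥ (log 4 − 1) δ² hold; equivalently, (1+t)log(1+t) − t ≥ (log 4 − 1) t² for all t ∈ (−1,1). -/
noncomputable section
namespace RMI

/-- `ψ(t) = (1+t) log(1+t) − t`. -/
def psi (t : ℝ) : ℝ := (1 + t) * Real.log (1 + t) - t

/-!
Taylor's formula at `0` with integral remainder, rescaled to the unit interval, reads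
`ψ t = t ^ 2 * ∫ u in 0..1, (1 - u) / (1 + u * t)`. The integrand decreases in `t`, so
`ψ t / t ^ 2` is smallest on `(-1, 1]` at `t = 1`, where it equals `ψ 1 = log 4 - 1`.
-/

lemma hasDerivAt_psi {t : ℝ} (ht : 1 + t ≠ 0) : HasDerivAt psi (Real.log (1 + t)) t := by
  have hadd : HasDerivAt (fun x : ℝ => 1 + x) 1 t := (hasDerivAt_id t).const_add 1
  refine ((hadd.mul (hadd.log ht)).sub (hasDerivAt_id t)).congr_deriv ?_
  field_simp
  ring

lemma psi_zero : psi 0 = 0 := by simp [psi]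

lemma psi_one : psi 1 = Real.log 4 - 1 := by
  have hlog : Real.log 4 = 2 * Real.log 2 := by
    rw [show (4 : ℝ) = 2 ^ 2 by norm_num, Real.log_pow, Nat.cast_ofNat]
  rw [psi, hlog, one_add_one_eq_two]

/-- The continuous extension of `ψ(t) / t²` to `t = 0`, as the remainder integral of Taylor's
formula. It is meant for `t > -1`, where the integrand has no pole on `[0, 1]`. -/
def psiQuotient (t : ℝ) : ℝ := ∫ u in (0 : ℝ)..1, (1 - u) / (1 + u * t)

lemma one_add_mul_pos {t u : ℝ} (ht : -1 < t) (hu : u ∈ Set.Icc (0 : ℝ) 1) : 0 < 1 + u * t := by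
  obtain ⟨hu₀, hu₁⟩ := hu
  rcases hu₀.eq_or_lt with rfl | hu_pos
  · simp
  · have hscaled : 0 < u * (1 + t) := mul_pos hu_pos (by linarith)
    linarith

lemma intervalIntegrable_psiQuotient {t : ℝ} (ht : -1 < t) :
    IntervalIntegrable (fun u : ℝ => (1 - u) / (1 + u * t)) MeasureTheory.volume 0 1 := by
  refine ContinuousOn.intervalIntegrable_of_Icc zero_le_one ?_
  exact ContinuousOn.div (by fun_prop) (by fun_prop) fun u hu => (one_add_mul_pos ht hu).ne'

/-- Differentiating Taylor's polynomial in its base point leaves only the remainder term. -/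
lemma hasDerivAt_psi_add_one_sub_mul_log {t u : ℝ} (hut : 1 + u * t ≠ 0) :
    HasDerivAt (fun v : ℝ => psi (v * t) + (1 - v) * (t * Real.log (1 + v * t)))
      (t ^ 2 * ((1 - u) / (1 + u * t))) u := by
  have hmul : HasDerivAt (fun v : ℝ => v * t) t u := hasDerivAt_mul_const t
  have hpsi := (hasDerivAt_psi hut).comp u hmul
  have hlog := ((hmul.const_add 1).log hut).const_mul t
  have hsub : HasDerivAt (fun v : ℝ => 1 - v) (-1) u := (hasDerivAt_id u).const_sub 1
  refine (hpsi.add (hsub.mul hlog)).congr_deriv ?_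
  ring

lemma psi_eq_sq_mul_psiQuotient {t : ℝ} (ht : -1 < t) : psi t = t ^ 2 * psiQuotient t := by
  have hftc := intervalIntegral.integral_eq_sub_of_hasDerivAt
    (fun u hu => hasDerivAt_psi_add_one_sub_mul_log
      (one_add_mul_pos ht (Set.uIcc_of_le (zero_le_one' ℝ) ▸ hu)).ne')
    ((intervalIntegrable_psiQuotient ht).const_mul (t ^ 2))
  rw [intervalIntegral.integral_const_mul] at hftc
  simpa [psiQuotient, psi_zero] using hftc.symm

lemma antitoneOn_psiQuotient : AntitoneOn psiQuotient (Set.Ioi (-1)) := by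
  intro s hs t ht hst
  refine intervalIntegral.integral_mono_on zero_le_one (intervalIntegrable_psiQuotient ht)
    (intervalIntegrable_psiQuotient hs) fun u hu => ?_
  have hpos : 0 < 1 + u * s := one_add_mul_pos hs hu
  have hu₀ : 0 ≤ u := hu.1
  have hu₁ : 0 ≤ 1 - u := sub_nonneg.2 hu.2
  gcongr

lemma psiQuotient_one : psiQuotient 1 = Real.log 4 - 1 := by
  rw [← psi_one, psi_eq_sq_mul_psiQuotient (by norm_num), one_pow, one_mul]

lemma log_four_sub_one_mul_sq_le_psi {t : ℝ} (ht : -1 < t) (ht₁ : t ≤ 1) :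
    (Real.log 4 - 1) * t ^ 2 ≤ psi t := by
  have hquot : psiQuotient 1 ≤ psiQuotient t :=
    antitoneOn_psiQuotient ht (ht.trans_le ht₁) ht₁
  calc (Real.log 4 - 1) * t ^ 2 = t ^ 2 * psiQuotient 1 := by rw [psiQuotient_one, mul_comm]
    _ ≤ t ^ 2 * psiQuotient t := by gcongr
    _ = psi t := (psi_eq_sq_mul_psiQuotient ht).symm

/-- For every `δ ∈ (0,1)`, both `ψ(δ) ≥ (log 4 − 1) δ²` and `ψ(−δ) ≥ (log 4 − 1) δ²`;
equivalently, `(1+t) log(1+t) − t ≥ (log 4 − 1) t²` for all `t ∈ (−1,1)`. -/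
theorem stmt_9 :
    (∀ δ : ℝ, δ ∈ Set.Ioo (0 : ℝ) 1 →
        (Real.log 4 - 1) * δ ^ 2 ≤ psi δ ∧ (Real.log 4 - 1) * δ ^ 2 ≤ psi (-δ)) ∧
    (∀ t : ℝ, t ∈ Set.Ioo (-1 : ℝ) 1 →
        (Real.log 4 - 1) * t ^ 2 ≤ (1 + t) * Real.log (1 + t) - t) := by
  refine ⟨fun δ ⟨hδ₀, hδ₁⟩ => ⟨?_, ?_⟩, fun t ht => log_four_sub_one_mul_sq_le_psi ht.1 ht.2.le⟩
  · exact log_four_sub_one_mul_sq_le_psi (by linarith) hδ₁.le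
  · simpa only [neg_sq] using
      log_four_sub_one_mul_sq_le_psi (t := -δ) (by linarith) (by linarith)

end RMI

end
end

section
/- For every α > 0, the integral ∫₀^α √(log(1 + 1/u)) du is finite and satisfies ∫₀^α √(log(1 + 1/u)) du ≤ 2α √(log(1 + 1/α)). -/
open MeasureTheory
noncomputable section
namespace RMI

/-!
By Bernoulli's inequality `u ↦ u * log (1 + 1 / u)` is increasing, so on `(0, α]` the function
`log (1 + 1 / u)` is at most `c / u` with `c = α * log (1 + 1 / α)`. Hence its square root is at
most `√c * u ^ (-1/2)`, whose integral over `(0, α]` is `2 * √c * √α`.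
-/

open Set

lemma monotoneOn_mul_log_one_add_one_div :
    MonotoneOn (fun u : ℝ ↦ u * Real.log (1 + 1 / u)) (Ioi 0) := by
  intro u (hu : 0 < u) v (hv : 0 < v) huv
  have bernoulli : (1 + 1 / u) ^ (u / v) ≤ 1 + 1 / v := calc
    (1 + 1 / u) ^ (u / v) ≤ 1 + u / v * (1 / u) :=
      rpow_one_add_le_one_add_mul_self (by linarith [one_div_pos.2 hu]) (by positivity)
        ((div_le_one hv).2 huv)
    _ = 1 + 1 / v := by field_simp
  calc u * Real.log (1 + 1 / u) = v * Real.log ((1 + 1 / u) ^ (u / v)) := by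
        rw [Real.log_rpow (by positivity)]
        field_simp
    _ ≤ v * Real.log (1 + 1 / v) := by gcongr

section RpowIntegral

variable {f : ℝ → ℝ} {α c p : ℝ}

lemma rpow_le_rpow_mul_rpow_neg_of_mul_le {u y : ℝ} (hu : 0 < u) (hy : 0 ≤ y)
    (hc : u * y ≤ c) (hp : 0 ≤ p) : y ^ p ≤ c ^ p * u ^ (-p) := by
  rw [Real.rpow_neg hu.le, ← div_eq_mul_inv, le_div_iff₀ (by positivity),
    ← Real.mul_rpow hy hu.le, mul_comm y]
  gcongr

lemma integrableOn_Ioc_const_mul_rpow_neg (hp : p < 1) :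
    IntegrableOn (fun u : ℝ ↦ c * u ^ (-p)) (Ioc 0 α) :=
  ((intervalIntegral.intervalIntegrable_rpow' (by linarith)).const_mul c).1

lemma integrableOn_Ioc_rpow_of_mul_le (hf : AEMeasurable f (volume.restrict (Ioc 0 α)))
    (hf₀ : ∀ u ∈ Ioc 0 α, 0 ≤ f u) (hfc : ∀ u ∈ Ioc 0 α, u * f u ≤ c)
    (hp₀ : 0 ≤ p) (hp₁ : p < 1) : IntegrableOn (fun u ↦ f u ^ p) (Ioc 0 α) := by
  refine (integrableOn_Ioc_const_mul_rpow_neg (c := c ^ p) hp₁).mono'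
    (hf.pow_const p).aestronglyMeasurable (ae_restrict_of_forall_mem measurableSet_Ioc ?_)
  intro u hu
  rw [Real.norm_of_nonneg (Real.rpow_nonneg (hf₀ u hu) p)]
  exact rpow_le_rpow_mul_rpow_neg_of_mul_le hu.1 (hf₀ u hu) (hfc u hu) hp₀

lemma setIntegral_Ioc_rpow_neg (hα : 0 ≤ α) (hp : p < 1) :
    ∫ u in Ioc 0 α, u ^ (-p) = α ^ (1 - p) / (1 - p) := by
  rw [← intervalIntegral.integral_of_le hα, integral_rpow (Or.inl (by linarith)),
    neg_add_eq_sub, Real.zero_rpow (by linarith), sub_zero]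

lemma setIntegral_Ioc_rpow_le_of_mul_le (hα : 0 ≤ α)
    (hf : AEMeasurable f (volume.restrict (Ioc 0 α)))
    (hf₀ : ∀ u ∈ Ioc 0 α, 0 ≤ f u) (hfc : ∀ u ∈ Ioc 0 α, u * f u ≤ c)
    (hp₀ : 0 ≤ p) (hp₁ : p < 1) :
    ∫ u in Ioc 0 α, f u ^ p ≤ c ^ p * (α ^ (1 - p) / (1 - p)) := calc
  ∫ u in Ioc 0 α, f u ^ p ≤ ∫ u in Ioc 0 α, c ^ p * u ^ (-p) :=
    setIntegral_mono_on (integrableOn_Ioc_rpow_of_mul_le hf hf₀ hfc hp₀ hp₁)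
      (integrableOn_Ioc_const_mul_rpow_neg hp₁) measurableSet_Ioc fun u hu ↦
        rpow_le_rpow_mul_rpow_neg_of_mul_le hu.1 (hf₀ u hu) (hfc u hu) hp₀
  _ = c ^ p * (α ^ (1 - p) / (1 - p)) := by
    rw [integral_const_mul, setIntegral_Ioc_rpow_neg hα hp₁]

lemma aemeasurable_Ioc_of_monotoneOn_mul (h : MonotoneOn (fun u ↦ u * f u) (Ioc 0 α)) :
    AEMeasurable f (volume.restrict (Ioc 0 α)) := by
  refine ((aemeasurable_restrict_of_monotoneOn measurableSet_Ioc h).div aemeasurable_id).congr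
    (ae_restrict_of_forall_mem measurableSet_Ioc ?_)
  exact fun u hu ↦ mul_div_cancel_left₀ (f u) hu.1.ne'

lemma mul_le_of_monotoneOn_mul (h : MonotoneOn (fun u ↦ u * f u) (Ioc 0 α)) :
    ∀ u ∈ Ioc 0 α, u * f u ≤ α * f α :=
  fun _ hu ↦ h hu (right_mem_Ioc.2 (hu.1.trans_le hu.2)) hu.2

lemma integrableOn_Ioc_rpow_of_monotoneOn_mul (h : MonotoneOn (fun u ↦ u * f u) (Ioc 0 α))
    (hf₀ : ∀ u ∈ Ioc 0 α, 0 ≤ f u) (hp₀ : 0 ≤ p) (hp₁ : p < 1) :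
    IntegrableOn (fun u ↦ f u ^ p) (Ioc 0 α) :=
  integrableOn_Ioc_rpow_of_mul_le (aemeasurable_Ioc_of_monotoneOn_mul h) hf₀
    (mul_le_of_monotoneOn_mul h) hp₀ hp₁

lemma setIntegral_Ioc_rpow_le_of_monotoneOn_mul (hα : 0 < α)
    (h : MonotoneOn (fun u ↦ u * f u) (Ioc 0 α)) (hf₀ : ∀ u ∈ Ioc 0 α, 0 ≤ f u)
    (hp₀ : 0 ≤ p) (hp₁ : p < 1) :
    ∫ u in Ioc 0 α, f u ^ p ≤ α / (1 - p) * f α ^ p := calc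
  ∫ u in Ioc 0 α, f u ^ p ≤ (α * f α) ^ p * (α ^ (1 - p) / (1 - p)) :=
    setIntegral_Ioc_rpow_le_of_mul_le hα.le (aemeasurable_Ioc_of_monotoneOn_mul h) hf₀
      (mul_le_of_monotoneOn_mul h) hp₀ hp₁
  _ = α ^ p * α ^ (1 - p) / (1 - p) * f α ^ p := by
    rw [Real.mul_rpow hα.le (hf₀ α (right_mem_Ioc.2 hα))]
    ring
  _ = α / (1 - p) * f α ^ p := by
    rw [← Real.rpow_add hα, add_sub_cancel, Real.rpow_one]

end RpowIntegral

/-- For every `α > 0`, `∫₀^α √(log(1 + 1/u)) du` is finite and is at most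
`2α √(log(1 + 1/α))`. -/
theorem stmt_10 (α : ℝ) (hα : 0 < α) :
    IntegrableOn (fun u : ℝ => Real.sqrt (Real.log (1 + 1 / u))) (Set.Ioc 0 α) ∧
    ∫ u in Set.Ioc (0 : ℝ) α, Real.sqrt (Real.log (1 + 1 / u)) ≤
      2 * α * Real.sqrt (Real.log (1 + 1 / α)) := by
  have hnonneg : ∀ u ∈ Ioc 0 α, 0 ≤ Real.log (1 + 1 / u) := fun u hu ↦
    Real.log_nonneg (le_add_of_nonneg_right (one_div_nonneg.2 hu.1.le))
  have hmono : MonotoneOn (fun u : ℝ ↦ u * Real.log (1 + 1 / u)) (Ioc 0 α) :=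
    monotoneOn_mul_log_one_add_one_div.mono Ioc_subset_Ioi_self
  simp only [Real.sqrt_eq_rpow]
  refine ⟨integrableOn_Ioc_rpow_of_monotoneOn_mul hmono hnonneg (by norm_num) (by norm_num), ?_⟩
  calc ∫ u in Ioc 0 α, Real.log (1 + 1 / u) ^ (1 / 2 : ℝ)
      ≤ α / (1 - 1 / 2) * Real.log (1 + 1 / α) ^ (1 / 2 : ℝ) :=
        setIntegral_Ioc_rpow_le_of_monotoneOn_mul hα hmono hnonneg (by norm_num) (by norm_num)
    _ = 2 * α * Real.log (1 + 1 / α) ^ (1 / 2 : ℝ) := by ring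

end RMI

end
end

section
/- There exists an absolute constant c > 0 with the following property: for all integers 1 ≤ S ≤ L with L ≥ 2, and all reals θ > 0 and 0 < ρ ≤ θ√L, one has ∫₀^θ √( S log(Le/S) + S log(1 + 2ρ/u) ) du ≤ c θ √(S log L). -/
open MeasureTheory
noncomputable section
namespace RMI

/-! The entropy `log (L e / S) + log (1 + 2ρ / u)` is at most `5 log L * (θ / u)` on `(0, θ]`: the
scale `ρ ≤ θ √L` contributes only a multiple of `log L`, and the singularity `log (θ / u)` at
`u = 0` is dominated by `θ / u`, whose square root is still integrable. -/

theorem sqrt_div_eq_const_mul_rpow (a : ℝ) {u : ℝ} (hu : 0 ≤ u) :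
    √(a / u) = √a * u ^ (-(1 / 2) : ℝ) := by
  rw [Real.sqrt_div' a hu, Real.rpow_neg hu, ← Real.sqrt_eq_rpow, div_eq_mul_inv]

theorem integrableOn_sqrt_div (a θ : ℝ) :
    IntegrableOn (fun u ↦ √(a / u)) (Set.Ioc 0 θ) := by
  have hpow : IntegrableOn (fun u : ℝ ↦ u ^ (-(1 / 2) : ℝ)) (Set.Ioc 0 θ) :=
    (intervalIntegral.intervalIntegrable_rpow' (by norm_num)).1
  exact IntegrableOn.congr_fun (hpow.const_mul √a)
    (fun u hu ↦ (sqrt_div_eq_const_mul_rpow a hu.1.le).symm) measurableSet_Ioc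

theorem setIntegral_sqrt_div (a : ℝ) {θ : ℝ} (hθ : 0 ≤ θ) :
    ∫ u in Set.Ioc 0 θ, √(a / u) = 2 * √(a * θ) :=
  calc ∫ u in Set.Ioc 0 θ, √(a / u)
      = ∫ u in Set.Ioc 0 θ, √a * u ^ (-(1 / 2) : ℝ) :=
        setIntegral_congr_fun measurableSet_Ioc fun u hu ↦ sqrt_div_eq_const_mul_rpow a hu.1.le
    _ = √a * ∫ u in (0 : ℝ)..θ, u ^ (-(1 / 2) : ℝ) := by
        rw [integral_const_mul, intervalIntegral.integral_of_le hθ]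
    _ = √a * (2 * √θ) := by
        rw [integral_rpow (Or.inl (by norm_num)), show -(1 / 2) + 1 = (1 / 2 : ℝ) by norm_num,
          Real.zero_rpow (by norm_num), Real.sqrt_eq_rpow θ]
        ring
    _ = 2 * √(a * θ) := by rw [Real.sqrt_mul' a hθ]; ring

theorem setIntegral_sqrt_le_of_le_div {f : ℝ → ℝ} {a θ : ℝ} (hθ : 0 ≤ θ)
    (hf : ∀ u ∈ Set.Ioc 0 θ, f u ≤ a / u) :
    ∫ u in Set.Ioc 0 θ, √(f u) ≤ 2 * √(a * θ) := by
  rw [← setIntegral_sqrt_div a hθ]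
  refine integral_mono_of_nonneg (.of_forall fun u ↦ Real.sqrt_nonneg _)
    (integrableOn_sqrt_div a θ) ?_
  exact ae_restrict_of_forall_mem measurableSet_Ioc fun u hu ↦ Real.sqrt_le_sqrt (hf u hu)

theorem log_one_add_div_le {r u θ : ℝ} (hr : 0 ≤ r) (hu : 0 < u) (huθ : u ≤ θ) :
    Real.log (1 + r / u) ≤ Real.log (1 + r / θ) + Real.log (θ / u) := by
  have hθ : 0 < θ := hu.trans_le huθ
  rw [← Real.log_mul (by positivity) (by positivity)]
  refine Real.log_le_log (by positivity) ?_
  calc 1 + r / u ≤ θ / u + r / u := by gcongr; exact (one_le_div hu).2 huθ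
    _ = (1 + r / θ) * (θ / u) := by field_simp

theorem log_one_add_two_mul_sqrt_le {L : ℝ} (hL : 2 ≤ L) :
    Real.log (1 + 2 * √L) ≤ 2 * Real.log L := by
  have amgm : 2 * √L ≤ 1 + L := by
    simpa [Real.sq_sqrt (zero_le_two.trans hL)] using two_mul_le_add_sq 1 √L
  calc Real.log (1 + 2 * √L) ≤ Real.log (L ^ 2) :=
        Real.log_le_log (by positivity) (by nlinarith)
    _ = 2 * Real.log L := by simp

theorem log_mul_exp_one_div_le {S L : ℝ} (hS : 1 ≤ S) (hL : 0 < L) :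
    Real.log (L * Real.exp 1 / S) ≤ Real.log L + 1 :=
  calc Real.log (L * Real.exp 1 / S) ≤ Real.log (L * Real.exp 1) :=
        Real.log_le_log (by positivity) (div_le_self (by positivity) hS)
    _ = Real.log L + 1 := by rw [Real.log_mul hL.ne' (Real.exp_ne_zero 1), Real.log_exp]

theorem one_le_two_mul_log {L : ℝ} (hL : 2 ≤ L) : 1 ≤ 2 * Real.log L := by
  linarith [Real.log_two_gt_d9, Real.log_le_log two_pos hL]

theorem log_add_log_le_five_mul_log_mul_div {S L θ ρ u : ℝ} (hS : 1 ≤ S) (hL : 2 ≤ L)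
    (hρ : 0 ≤ ρ) (hρL : ρ ≤ θ * √L) (hu : 0 < u) (huθ : u ≤ θ) :
    Real.log (L * Real.exp 1 / S) + Real.log (1 + 2 * ρ / u) ≤ 5 * Real.log L * (θ / u) := by
  have hθ : 0 < θ := hu.trans_le huθ
  have hratio : 1 ≤ θ / u := (one_le_div hu).2 huθ
  have hlogL : 1 ≤ 2 * Real.log L := one_le_two_mul_log hL
  have hscale : Real.log (1 + 2 * ρ / θ) ≤ 2 * Real.log L := by
    refine (Real.log_le_log (by positivity) ?_).trans (log_one_add_two_mul_sqrt_le hL)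
    rw [mul_div_assoc]
    gcongr
    exact (div_le_iff₀' hθ).2 hρL
  calc Real.log (L * Real.exp 1 / S) + Real.log (1 + 2 * ρ / u)
      ≤ (Real.log L + 1) + (Real.log (1 + 2 * ρ / θ) + Real.log (θ / u)) :=
        add_le_add (log_mul_exp_one_div_le hS (two_pos.trans_le hL))
          (log_one_add_div_le (by positivity) hu huθ)
    _ ≤ (Real.log L + 1) + (2 * Real.log L + (θ / u - 1)) := by
        gcongr
        exact Real.log_le_sub_one_of_pos (by positivity)
    _ = 3 * Real.log L * 1 + 1 * (θ / u) := by ring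
    _ ≤ 3 * Real.log L * (θ / u) + 2 * Real.log L * (θ / u) := by gcongr; linarith
    _ = 5 * Real.log L * (θ / u) := by ring

theorem stmt_15_general {S L θ ρ : ℝ} (hS : 1 ≤ S) (hL : 2 ≤ L) (hθ : 0 ≤ θ) (hρ : 0 ≤ ρ)
    (hρL : ρ ≤ θ * √L) :
    ∫ u in Set.Ioc 0 θ,
        √(S * Real.log (L * Real.exp 1 / S) + S * Real.log (1 + 2 * ρ / u)) ≤
      2 * √5 * θ * √(S * Real.log L) := by
  have hentropy : ∀ u ∈ Set.Ioc 0 θ,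
      S * Real.log (L * Real.exp 1 / S) + S * Real.log (1 + 2 * ρ / u) ≤
        5 * θ * (S * Real.log L) / u := by
    rintro u ⟨hu, huθ⟩
    calc S * Real.log (L * Real.exp 1 / S) + S * Real.log (1 + 2 * ρ / u)
        ≤ S * (5 * Real.log L * (θ / u)) := by
          rw [← mul_add]
          gcongr
          exact log_add_log_le_five_mul_log_mul_div hS hL hρ hρL hu huθ
      _ = 5 * θ * (S * Real.log L) / u := by ring
  calc _ ≤ 2 * √(5 * θ * (S * Real.log L) * θ) := setIntegral_sqrt_le_of_le_div hθ hentropy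
    _ = 2 * √(5 * θ ^ 2 * (S * Real.log L)) := by ring_nf
    _ = 2 * √5 * θ * √(S * Real.log L) := by
        rw [Real.sqrt_mul (by positivity), Real.sqrt_mul (by positivity), Real.sqrt_sq hθ]
        ring

/-- **Dudley-integral bound.** There is an absolute constant `c > 0` such that for all
`1 ≤ S ≤ L` with `L ≥ 2` and all `θ > 0`, `0 < ρ ≤ θ√L`,
`∫₀^θ √(S log(Le/S) + S log(1 + 2ρ/u)) du ≤ c θ √(S log L)`. -/
theorem stmt_15 :
    ∃ c : ℝ, 0 < c ∧
      ∀ (S L : ℕ), 1 ≤ S → S ≤ L → 2 ≤ L →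
        ∀ θ ρ : ℝ, 0 < θ → 0 < ρ → ρ ≤ θ * Real.sqrt L →
          ∫ u in Set.Ioc (0 : ℝ) θ,
              Real.sqrt ((S : ℝ) * Real.log ((L : ℝ) * Real.exp 1 / S) +
                (S : ℝ) * Real.log (1 + 2 * ρ / u)) ≤
            c * θ * Real.sqrt ((S : ℝ) * Real.log L) :=
  ⟨2 * √5, by positivity, fun _ _ hS _ hL _ _ hθ hρ hρL ↦
    stmt_15_general (by exact_mod_cast hS) (by exact_mod_cast hL) hθ.le hρ.le hρL⟩

end RMI
end
end
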